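/- Let S = K[Y_1,...,Y_n], I ⊆ S a monomial ideal with minimal monomial generating set G(I), R = S/I, and y = y_{i_1}···y_{i_r} with i_1 < ... < i_r, F = {i_1,...,i_r}. For b ∈ ℤ^n with G_b = {j : b_j < 0}, the ℤ^n-graded component (R_y)_b is isomorphic to K (equivalently, nonzero) if and only if F ⊇ G_b and for every u ∈ G(I) there exists j ∉ F with ν_j(u) > b_j ≥ 0. -/

import Mathlib

noncomputable section
set_option synthInstance.maxHeartbeats 400000
set_option maxHeartbeats 1000000

open MvPolynomial

variable {K : Type*} [Field K] {n : ℕ}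

/-- The `b`-th `ℤⁿ`-graded component of the localization `R_y` of `R = S/I` at the image
`y` of the squarefree monomial `∏_{j ∈ F} Y_j`:  the `K`-span of all fractions `r/y^l`
with `r` the class of a homogeneous element (a monomial times a scalar) whose
`ℤⁿ`-multidegree satisfies `multideg r - l·multideg y = b`. -/
def gradedComponent (I : Ideal (MvPolynomial (Fin n) K)) (F : Finset (Fin n))
    (b : Fin n → ℤ) :
    Submodule K (Localization.Away
      (Ideal.Quotient.mk I (∏ j ∈ F, (X j : MvPolynomial (Fin n) K)))) :=
  Submodule.span K
    { z | ∃ (c : K) (d : Fin n →₀ ℕ) (l : ℕ),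
        (∀ j : Fin n, (d j : ℤ) - l * (if j ∈ F then 1 else 0) = b j) ∧
        z = Localization.mk (Ideal.Quotient.mk I (monomial d c))
          (⟨(Ideal.Quotient.mk I (∏ j ∈ F, X j)) ^ l, ⟨l, rfl⟩⟩ :
            Submonoid.powers (Ideal.Quotient.mk I (∏ j ∈ F, X j))) }

/-- The exponent vector of the squarefree monomial supported on `F`. -/
def indF (F : Finset (Fin n)) : Fin n →₀ ℕ :=
  Finsupp.equivFunOnFinite.symm (fun j => if j ∈ F then 1 else 0)

theorem indF_apply (F : Finset (Fin n)) (j : Fin n) :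
    indF F j = if j ∈ F then 1 else 0 := rfl

theorem prod_X_eq (F : Finset (Fin n)) :
    (∏ j ∈ F, (X j : MvPolynomial (Fin n) K)) = monomial (indF F) 1 := by
  have h : indF F = ∑ j ∈ F, Finsupp.single j 1 := by
    ext j
    simp [indF_apply, Finsupp.finsetSum_apply, Finsupp.single_apply]
  rw [h, monomial_sum_one]
  rfl

theorem prod_X_pow_mul (F : Finset (Fin n)) (m : ℕ) (d : Fin n →₀ ℕ) (c : K) :
    (∏ j ∈ F, (X j : MvPolynomial (Fin n) K)) ^ m * monomial d c
      = monomial (m • indF F + d) c := by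
  rw [prod_X_eq, monomial_pow, monomial_mul]
  simp

theorem mono_mem_iff (U : Finset (Fin n →₀ ℕ)) (d : Fin n →₀ ℕ) (c : K) (hc : c ≠ 0) :
    monomial d c ∈ Ideal.span
      ((fun d => (monomial d (1 : K) : MvPolynomial (Fin n) K)) '' U) ↔ ∃ u ∈ U, u ≤ d := by
  classical
  rw [mem_ideal_span_monomial_image, support_monomial, if_neg hc]
  simp

theorem frac_zero_iff (I : Ideal (MvPolynomial (Fin n) K)) (U : Finset (Fin n →₀ ℕ))
    (hgen : I = Ideal.span ((fun d => (monomial d (1 : K) : MvPolynomial (Fin n) K)) '' U))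
    (F : Finset (Fin n)) (d : Fin n →₀ ℕ) (c : K) (hc : c ≠ 0)
    (s : Submonoid.powers (Ideal.Quotient.mk I (∏ j ∈ F, X j))) :
    Localization.mk (Ideal.Quotient.mk I (monomial d c)) s = 0 ↔
      ∃ m : ℕ, ∃ u ∈ U, u ≤ m • indF F + d := by
  have key : ∀ m : ℕ, (Ideal.Quotient.mk I (∏ j ∈ F, X j)) ^ m *
      Ideal.Quotient.mk I (monomial d c) = 0 ↔ ∃ u ∈ U, u ≤ m • indF F + d := by
    intro m
    rw [← map_pow, ← map_mul, prod_X_pow_mul, Ideal.Quotient.eq_zero_iff_mem, hgen,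
      mono_mem_iff U _ c hc]
  rw [Localization.mk_eq_mk', IsLocalization.mk'_eq_zero_iff]
  constructor
  · rintro ⟨⟨_, m, rfl⟩, h⟩
    exact ⟨m, (key m).1 h⟩
  · rintro ⟨m, h⟩
    exact ⟨⟨_, m, rfl⟩, (key m).2 h⟩

/-- Takayama's Lemma.  Let `S = K[Y_1,…,Y_n]`, let `I ⊆ S` be a monomial ideal with
minimal monomial generating set `G(I)` (recorded by the exponent vectors `U`, an
antichain under divisibility), `R = S/I`, and `y = y_{i_1}⋯y_{i_r}` with
`F = {i_1,…,i_r}`.  For `b ∈ ℤⁿ`, the graded component `(R_y)_b` is isomorphic to `K`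
(equivalently, nonzero) if and only if `F ⊇ G_b = {j : b_j < 0}` and for every
`u ∈ G(I)` there exists `j ∉ F` with `ν_j(u) > b_j ≥ 0`. -/
theorem stmt_11 (I : Ideal (MvPolynomial (Fin n) K)) (U : Finset (Fin n →₀ ℕ))
    (hgen : I = Ideal.span ((fun d => (monomial d (1 : K) : MvPolynomial (Fin n) K)) '' U))
    (hmin : ∀ d ∈ U, ∀ d' ∈ U, d ≤ d' → d = d')
    (F : Finset (Fin n)) (b : Fin n → ℤ) :
    Nonempty ((gradedComponent I F b) ≃ₗ[K] K) ↔
      ((∀ j : Fin n, b j < 0 → j ∈ F) ∧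
        ∀ d ∈ U, ∃ j : Fin n, j ∉ F ∧ b j < (d j : ℤ) ∧ 0 ≤ b j) := by
  constructor
  · rintro ⟨e⟩
    have hne : ∃ (c : K) (d : Fin n →₀ ℕ) (l : ℕ),
        (∀ j : Fin n, (d j : ℤ) - l * (if j ∈ F then 1 else 0) = b j) ∧
        Localization.mk (Ideal.Quotient.mk I (monomial d c))
          (⟨(Ideal.Quotient.mk I (∏ j ∈ F, X j)) ^ l, ⟨l, rfl⟩⟩ :
            Submonoid.powers (Ideal.Quotient.mk I (∏ j ∈ F, X j))) ≠ 0 := by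
      by_contra hcon
      push Not at hcon
      have hbot : gradedComponent I F b = ⊥ := by
        rw [gradedComponent, Submodule.span_eq_bot]
        rintro z ⟨c, d, l, h, rfl⟩
        exact hcon c d l h
      have h1 : e.symm 1 = 0 := by
        apply Subtype.ext
        exact (Submodule.mem_bot K).1 (hbot.le (e.symm 1).2)
      have : (1 : K) = 0 := by simpa using congrArg e h1
      exact one_ne_zero this
    obtain ⟨c, d, l, h, hz⟩ := hne
    have hc : c ≠ 0 := by
      rintro rfl
      apply hz
      rw [map_zero, map_zero, Localization.mk_zero]
    rw [Ne, frac_zero_iff I U hgen F d c hc] at hz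
    constructor
    · intro j hj
      by_contra hjF
      have := h j
      rw [if_neg hjF] at this
      omega
    · intro u hu
      by_contra hcon
      push Not at hcon
      apply hz
      refine ⟨∑ j, u j, u, hu, fun j => ?_⟩
      have h1 := h j
      rw [Finsupp.add_apply, Finsupp.smul_apply, indF_apply]
      by_cases hjF : j ∈ F
      · have : u j ≤ ∑ j, u j :=
          Finset.single_le_sum (f := fun j => u j) (fun _ _ => Nat.zero_le _) (Finset.mem_univ j)
        simp only [hjF, if_true, smul_eq_mul]
        omega
      · have h2 := hcon j hjF
        simp only [hjF, if_false, smul_eq_mul] at h1 ⊢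
        omega
  · rintro ⟨hneg, hU⟩
    set l : ℕ := ∑ j, (b j).natAbs with hl
    have hlj : ∀ j, (b j).natAbs ≤ l := fun j =>
      Finset.single_le_sum (f := fun j => (b j).natAbs) (fun _ _ => Nat.zero_le _)
        (Finset.mem_univ j)
    set d : Fin n →₀ ℕ := Finsupp.equivFunOnFinite.symm
      (fun j => (b j + l * (if j ∈ F then 1 else 0)).toNat) with hd
    have hdj : ∀ j, (d j : ℤ) = b j + l * (if j ∈ F then 1 else 0) := by
      intro j
      change (((b j + l * (if j ∈ F then 1 else 0)).toNat : ℕ) : ℤ) = _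
      apply Int.toNat_of_nonneg
      have := hlj j
      have h2 := hneg j
      by_cases hjF : j ∈ F
      · simp only [hjF, if_true]
        omega
      · simp only [hjF, if_false]
        by_contra h3
        exact hjF (h2 (by omega))
    set z0 := Localization.mk (Ideal.Quotient.mk I (monomial d (1 : K)))
          (⟨(Ideal.Quotient.mk I (∏ j ∈ F, X j)) ^ l, ⟨l, rfl⟩⟩ :
            Submonoid.powers (Ideal.Quotient.mk I (∏ j ∈ F, X j))) with hz0
    have hz0ne : z0 ≠ 0 := by
      rw [hz0, Ne, frac_zero_iff I U hgen F d 1 one_ne_zero]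
      rintro ⟨m, u, hu, hle⟩
      obtain ⟨j, hjF, hj1, hj2⟩ := hU u hu
      have h1 := hle j
      have h2 := hdj j
      rw [Finsupp.add_apply, Finsupp.smul_apply, indF_apply] at h1
      simp only [hjF, if_false, smul_eq_mul] at h1 h2
      omega
    have hspan : gradedComponent I F b = Submodule.span K {z0} := by
      apply le_antisymm
      · rw [gradedComponent, Submodule.span_le]
        rintro z ⟨c, d', l', h, rfl⟩
        rw [SetLike.mem_coe, Submodule.mem_span_singleton]
        refine ⟨c, ?_⟩
        rw [hz0, Localization.smul_mk, Localization.mk_eq_mk_iff, Localization.r_iff_exists]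
        refine ⟨1, ?_⟩
        have hsm : c • (Ideal.Quotient.mk I (monomial d (1 : K)))
            = Ideal.Quotient.mk I (monomial d c) := by
          have : monomial d c = c • (monomial d (1 : K)) := by
            rw [smul_monomial, smul_eq_mul, mul_one]
          rw [this]
          rfl
        have hdd : l' • indF F + d = l • indF F + d' := by
          ext j
          have h1 := h j
          have h2 := hdj j
          simp only [Finsupp.add_apply, Finsupp.smul_apply, indF_apply, smul_eq_mul]
          by_cases hjF : j ∈ F
          · simp only [hjF, if_true] at h1 h2 ⊢
            omega
          · simp only [hjF, if_false] at h1 h2 ⊢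
            omega
        rw [hsm]
        simp only [OneMemClass.coe_one, one_mul]
        rw [← map_pow, ← map_pow, ← map_mul, ← map_mul, prod_X_pow_mul, prod_X_pow_mul, hdd]
      · rw [Submodule.span_le, Set.singleton_subset_iff]
        apply Submodule.subset_span
        refine ⟨1, d, l, fun j => ?_, rfl⟩
        rw [hdj j]
        ring
    rw [hspan]
    exact ⟨(LinearEquiv.toSpanNonzeroSingleton K _ z0 hz0ne).symm⟩
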